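/- There exists a constant C > 0 such that for every positive integer N, every positive integer σ dividing N, and every function u that is four times continuously differentiable on a neighbourhood of [0,1]² and vanishes on the boundary of [0,1]², the two-scale interpolant satisfies |||u − Î_{N,N}u||| ≤ C (N^{−1} |u|₂ + σ^{−3} ‖∂⁴u/∂x²∂y²‖_{0,Ω}). -/

import Mathlib

open MeasureTheory Finset

noncomputable section

/-- The hat function `ψ_i^N` on the uniform mesh of `[0,1]` with `N` intervals. -/
def hat (N i : ℕ) (x : ℝ) : ℝ :=
  if ((i : ℝ) - 1) / N ≤ x ∧ x ≤ (i : ℝ) / N then N * (x - ((i : ℝ) - 1) / N)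
  else if (i : ℝ) / N ≤ x ∧ x ≤ ((i : ℝ) + 1) / N then N * (((i : ℝ) + 1) / N - x)
  else 0

/-- The nodal piecewise bilinear interpolant `I_{Nx,Ny} u`. -/
def interp (Nx Ny : ℕ) (u : ℝ × ℝ → ℝ) : ℝ × ℝ → ℝ := fun p =>
  ∑ i ∈ range (Nx + 1), ∑ j ∈ range (Ny + 1),
    u ((i : ℝ) / Nx, (j : ℝ) / Ny) * hat Nx i p.1 * hat Ny j p.2

/-- The one-directional interpolant `I_{Nx,0} u` (interpolation in the `x`-direction only). -/
def interpX (Nx : ℕ) (u : ℝ × ℝ → ℝ) : ℝ × ℝ → ℝ := fun p =>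
  ∑ i ∈ range (Nx + 1), u ((i : ℝ) / Nx, p.2) * hat Nx i p.1

/-- The one-directional interpolant `I_{0,Ny} u` (interpolation in the `y`-direction only). -/
def interpY (Ny : ℕ) (u : ℝ × ℝ → ℝ) : ℝ × ℝ → ℝ := fun p =>
  ∑ j ∈ range (Ny + 1), u (p.1, (j : ℝ) / Ny) * hat Ny j p.2

/-- The two-scale interpolant `Î_{N,N} u = I_{N,σ}u + I_{σ,N}u − I_{σ,σ}u`. -/
def twoScale (N σ : ℕ) (u : ℝ × ℝ → ℝ) : ℝ × ℝ → ℝ := fun p =>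
  interp N σ u p + interp σ N u p - interp σ σ u p

/-- The multiscale interpolant
`I^{(k)}_{N,N} u = Σ_{i=0}^{k} I_{N/2^i, N/2^{k−i}}u − Σ_{i=1}^{k} I_{N/2^i, N/2^{k+1−i}}u`. -/
def msInterp (N k : ℕ) (u : ℝ × ℝ → ℝ) : ℝ × ℝ → ℝ := fun p =>
  ∑ i ∈ range (k + 1), interp (N / 2 ^ i) (N / 2 ^ (k - i)) u p
    - ∑ i ∈ Finset.Icc 1 k, interp (N / 2 ^ i) (N / 2 ^ (k + 1 - i)) u p

/-- The closed square `[0,1]²`. -/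
def unitSquare : Set (ℝ × ℝ) := Set.Icc (0 : ℝ) 1 ×ˢ Set.Icc (0 : ℝ) 1

/-- The open square `Ω = (0,1)²`. -/
def Omega2 : Set (ℝ × ℝ) := Set.Ioo (0 : ℝ) 1 ×ˢ Set.Ioo (0 : ℝ) 1

/-- Partial derivative in `x` (defined a.e. for Lipschitz functions; junk value `0` elsewhere). -/
def pderivX (v : ℝ × ℝ → ℝ) : ℝ × ℝ → ℝ := fun p => deriv (fun x => v (x, p.2)) p.1

/-- Partial derivative in `y` (defined a.e. for Lipschitz functions; junk value `0` elsewhere). -/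
def pderivY (v : ℝ × ℝ → ℝ) : ℝ × ℝ → ℝ := fun p => deriv (fun y => v (p.1, y)) p.2

/-- The `L²(Ω)` norm `‖v‖_{0,Ω}`. -/
def L2norm (v : ℝ × ℝ → ℝ) : ℝ := Real.sqrt (∫ p in Omega2, (v p) ^ 2)

/-- The energy norm `|||v||| = (∫_Ω |∇v|² + ∫_Ω v²)^{1/2}`, gradients taken a.e. -/
def energyNorm (v : ℝ × ℝ → ℝ) : ℝ :=
  Real.sqrt (∫ p in Omega2, ((pderivX v p) ^ 2 + (pderivY v p) ^ 2 + (v p) ^ 2))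

/-- `u` is four times continuously differentiable on a neighbourhood of `[0,1]²`. -/
def C4Near (u : ℝ × ℝ → ℝ) : Prop :=
  ∃ U : Set (ℝ × ℝ), IsOpen U ∧ unitSquare ⊆ U ∧ ContDiffOn ℝ 4 u U

/-- `u` vanishes on the boundary of `[0,1]²`. -/
def VanishOnBoundary (u : ℝ × ℝ → ℝ) : Prop :=
  ∀ p ∈ unitSquare, (p.1 = 0 ∨ p.1 = 1 ∨ p.2 = 0 ∨ p.2 = 1) → u p = 0

/-- The seminorm `|u|₂ = ‖u_xx‖_{0,Ω} + ‖u_xy‖_{0,Ω} + ‖u_yy‖_{0,Ω}`. -/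
def semi2 (u : ℝ × ℝ → ℝ) : ℝ :=
  L2norm (pderivX (pderivX u)) + L2norm (pderivX (pderivY u)) + L2norm (pderivY (pderivY u))

/-- The mixed fourth derivative `∂⁴u/∂x²∂y²`. -/
def uxxyy (u : ℝ × ℝ → ℝ) : ℝ × ℝ → ℝ := pderivX (pderivX (pderivY (pderivY u)))

/-- The bilinear form `B(v,w) = ∫_Ω ∇v·∇w + ∫_Ω v w`, gradients taken a.e. -/
def Bform (v w : ℝ × ℝ → ℝ) : ℝ :=
  ∫ p in Omega2, (pderivX v p * pderivX w p + pderivY v p * pderivY w p + v p * w p)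

/-- The piecewise linear interpolant of a function of one variable. -/
def linInterp (N : ℕ) (v : ℝ → ℝ) (x : ℝ) : ℝ :=
  ∑ i ∈ range (N + 1), v ((i : ℝ) / N) * hat N i x

/-- The error of piecewise linear interpolation. -/
def linErr (N : ℕ) (v : ℝ → ℝ) (x : ℝ) : ℝ := v x - linInterp N v x

/-- The error of interpolation in the `x`-direction. -/
def errX (N : ℕ) (w : ℝ × ℝ → ℝ) : ℝ × ℝ → ℝ := fun p => w p - interpX N w p

/-- The error of interpolation in the `y`-direction. -/
def errY (N : ℕ) (w : ℝ × ℝ → ℝ) : ℝ × ℝ → ℝ := fun p => w p - interpY N w p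

/-- The squared `L²(Ω)` norm, as an extended nonnegative real. -/
def sqNorm (v : ℝ × ℝ → ℝ) : ENNReal := ∫⁻ p in Omega2, ENNReal.ofReal (v p ^ 2)

lemma hat_eq_max {N : ℕ} (hN : 0 < N) (i : ℕ) (x : ℝ) :
    hat N i x = max 0 (1 - |(N : ℝ) * x - i|) := by
  have hN' : (0 : ℝ) < N := by exact_mod_cast hN
  have h1 : ((N : ℝ) * (x - ((i : ℝ) - 1) / N)) = N * x - i + 1 := by field_simp; ring
  have h2 : ((N : ℝ) * (((i : ℝ) + 1) / N - x)) = 1 - (N * x - i) := by field_simp; ring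
  unfold hat
  rw [h1, h2]
  simp only [div_le_iff₀ hN', le_div_iff₀ hN', mul_comm x (N : ℝ)]
  split_ifs with ha hb
  · rw [abs_of_nonpos (by linarith), max_eq_right (by linarith)]; ring
  · rw [abs_of_nonneg (by linarith), max_eq_right (by linarith)]
  · rw [max_eq_left]
    by_contra! hc
    have hd : |(N : ℝ) * x - i| < 1 := by linarith
    rw [abs_lt] at hd
    rcases le_total ((N : ℝ) * x) i with h | h
    · exact ha ⟨by linarith, h⟩
    · exact hb ⟨h, by linarith⟩

lemma continuous_hat {N : ℕ} (hN : 0 < N) (i : ℕ) : Continuous (hat N i) := by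
  have : hat N i = fun x => max 0 (1 - |(N : ℝ) * x - i|) := funext (hat_eq_max hN i)
  rw [this]
  fun_prop

lemma linInterp_eq_of_mem_cell {N k : ℕ} (hk : k < N) (v : ℝ → ℝ) {x : ℝ}
    (hx : x ∈ Set.Icc ((k : ℝ) / N) (((k : ℝ) + 1) / N)) :
    linInterp N v x
      = v ((k : ℝ) / N) + (N * x - k) * (v (((k : ℝ) + 1) / N) - v ((k : ℝ) / N)) := by
  have hN : 0 < N := by omega
  have hN' : (0 : ℝ) < N := by exact_mod_cast hN
  obtain ⟨h1, h2⟩ := hx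
  rw [div_le_iff₀ hN', mul_comm] at h1
  rw [le_div_iff₀ hN', mul_comm] at h2
  unfold linInterp
  rw [Finset.sum_eq_add_of_mem k (k + 1) (by simp; omega) (by simp; omega) (by omega)]
  · rw [hat_eq_max hN, hat_eq_max hN]
    push_cast
    rw [abs_of_nonneg (by linarith), abs_of_nonpos (by linarith), max_eq_right (by linarith),
      max_eq_right (by linarith)]
    ring
  · intro i _ hi
    rw [hat_eq_max hN, max_eq_left, mul_zero]
    rcases lt_or_gt_of_ne hi.1 with h | h
    · have : (i : ℝ) + 1 ≤ k := by exact_mod_cast h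
      rw [abs_of_nonneg (by linarith)]
      linarith
    · have : (k : ℝ) + 2 ≤ i := by
        have : k + 2 ≤ i := by omega
        exact_mod_cast this
      rw [abs_of_nonpos (by linarith)]
      linarith

/-- Cauchy–Schwarz against the constant function. -/
lemma sq_integral_abs_le {a b : ℝ} (hab : a < b) {f : ℝ → ℝ} (hf : Continuous f) :
    (∫ x in a..b, |f x|) ^ 2 ≤ (b - a) * ∫ x in a..b, f x ^ 2 := by
  have hpos : 0 < b - a := sub_pos.2 hab
  set A := ∫ x in a..b, |f x| with hA
  have h0 : 0 ≤ ∫ x in a..b, ((b - a) * |f x| - A) ^ 2 :=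
    intervalIntegral.integral_nonneg hab.le fun x _ => sq_nonneg _
  have h1 : ∀ x, ((b - a) * |f x| - A) ^ 2
      = (b - a) ^ 2 * f x ^ 2 - (2 * (b - a) * A) * |f x| + A ^ 2 := by
    intro x
    rw [← sq_abs (f x)]
    ring
  simp_rw [h1] at h0
  rw [intervalIntegral.integral_add (by apply Continuous.intervalIntegrable; fun_prop)
      (by apply Continuous.intervalIntegrable; fun_prop),
    intervalIntegral.integral_sub (by apply Continuous.intervalIntegrable; fun_prop)
      (by apply Continuous.intervalIntegrable; fun_prop),
    intervalIntegral.integral_const_mul, intervalIntegral.integral_const_mul,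
    intervalIntegral.integral_const, smul_eq_mul, ← hA] at h0
  have h2 : 0 ≤ (b - a) * ((b - a) * (∫ x in a..b, f x ^ 2) - A ^ 2) := by
    nlinarith
  have := nonneg_of_mul_nonneg_right h2 hpos
  linarith

/-- The increments of a function within an interval are bounded by the integral of the absolute
value of its derivative. -/
lemma abs_sub_le_integral_abs_deriv {a b x y : ℝ} {v v' : ℝ → ℝ}
    (hv : ∀ t, HasDerivAt v (v' t) t) (hv' : Continuous v')
    (hx : x ∈ Set.Icc a b) (hy : y ∈ Set.Icc a b) :
    |v x - v y| ≤ ∫ t in a..b, |v' t| := by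
  wlog hxy : y ≤ x generalizing x y
  · rw [abs_sub_comm]
    exact this hy hx (le_of_not_ge hxy)
  rw [← intervalIntegral.integral_eq_sub_of_hasDerivAt (fun t _ => hv t)
    (hv'.intervalIntegrable _ _)]
  refine (intervalIntegral.abs_integral_le_integral_abs hxy).trans ?_
  exact intervalIntegral.integral_mono_interval hy.1 hxy hx.2
    (Filter.Eventually.of_forall fun t => abs_nonneg _)
    (hv'.abs.intervalIntegrable _ _)

lemma exists_slope_eq {a b : ℝ} (hab : a < b) {v v' : ℝ → ℝ}
    (hv : ∀ t, HasDerivAt v (v' t) t) :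
    ∃ c ∈ Set.Ioo a b, v b - v a = (b - a) * v' c := by
  obtain ⟨c, hc, h⟩ := exists_hasDerivAt_eq_slope v v' hab
    (fun t _ => (hv t).continuousAt.continuousWithinAt) (fun t _ => hv t)
  refine ⟨c, hc, ?_⟩
  rw [h]
  field_simp [(sub_pos.2 hab).ne']

section Cell

variable {N k : ℕ} {v v' v'' : ℝ → ℝ} {x : ℝ}

lemma cell_length (hk : k < N) : ((k : ℝ) + 1) / N - (k : ℝ) / N = (N : ℝ)⁻¹ := by
  have hN' : (0 : ℝ) < N := by exact_mod_cast (by omega : 0 < N)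
  field_simp
  ring

lemma cell_lt (hk : k < N) : (k : ℝ) / N < ((k : ℝ) + 1) / N := by
  have hN' : (0 : ℝ) < N := by exact_mod_cast (by omega : 0 < N)
  have := cell_length hk
  have := inv_pos.2 hN'
  linarith

lemma abs_linErr_le_integral_deriv (hk : k < N)
    (hv : ∀ t, HasDerivAt v (v' t) t) (hv' : Continuous v')
    (hx : x ∈ Set.Ioo ((k : ℝ) / N) (((k : ℝ) + 1) / N)) :
    |linErr N v x| ≤ 2 * ∫ t in ((k : ℝ) / N)..(((k : ℝ) + 1) / N), |v' t| := by
  have hN' : (0 : ℝ) < N := by exact_mod_cast (by omega : 0 < N)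
  have hx' := Set.Ioo_subset_Icc_self hx
  rw [linErr, linInterp_eq_of_mem_cell hk v hx']
  have h1 := abs_sub_le_integral_abs_deriv hv hv' hx' (Set.left_mem_Icc.2 (cell_lt hk).le)
  have h2 := abs_sub_le_integral_abs_deriv hv hv' (Set.right_mem_Icc.2 (cell_lt hk).le)
    (Set.left_mem_Icc.2 (cell_lt hk).le)
  have h3 : |(N : ℝ) * x - k| ≤ 1 := by
    obtain ⟨ha, hb⟩ := hx
    rw [div_lt_iff₀ hN'] at ha
    rw [lt_div_iff₀ hN'] at hb
    rw [abs_le]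
    constructor <;> linarith
  calc _ = |(v x - v (k / N)) - (N * x - k) * (v ((k + 1) / N) - v (k / N))| := by ring_nf
    _ ≤ |v x - v (k / N)| + |(N : ℝ) * x - k| * |v ((k + 1) / N) - v (k / N)| := by
        rw [← abs_mul]; exact abs_sub _ _
    _ ≤ (∫ t in ((k : ℝ) / N)..(((k : ℝ) + 1) / N), |v' t|)
        + 1 * ∫ t in ((k : ℝ) / N)..(((k : ℝ) + 1) / N), |v' t| := by gcongr
    _ = _ := by ring

lemma hasDerivAt_linErr (hk : k < N) (hv : ∀ t, HasDerivAt v (v' t) t)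
    (hx : x ∈ Set.Ioo ((k : ℝ) / N) (((k : ℝ) + 1) / N)) :
    HasDerivAt (linErr N v) (v' x - N * (v (((k : ℝ) + 1) / N) - v ((k : ℝ) / N))) x := by
  have h : HasDerivAt (fun y => v y - (v ((k : ℝ) / N)
      + ((N : ℝ) * y - k) * (v (((k : ℝ) + 1) / N) - v ((k : ℝ) / N))))
      (v' x - N * (v (((k : ℝ) + 1) / N) - v ((k : ℝ) / N))) x := by
    refine (hv x).sub ?_
    have := ((((hasDerivAt_id x).const_mul (N : ℝ)).sub_const (k : ℝ)).mul_const
      (v (((k : ℝ) + 1) / N) - v ((k : ℝ) / N))).const_add (v ((k : ℝ) / N))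
    simpa using this
  refine h.congr_of_eventuallyEq ?_
  filter_upwards [isOpen_Ioo.mem_nhds hx] with y hy
  rw [linErr, linInterp_eq_of_mem_cell hk v (Set.Ioo_subset_Icc_self hy)]

lemma abs_deriv_linErr_le_integral_deriv2 (hk : k < N)
    (hv : ∀ t, HasDerivAt v (v' t) t) (hv' : ∀ t, HasDerivAt v' (v'' t) t)
    (hv'' : Continuous v'') (hx : x ∈ Set.Ioo ((k : ℝ) / N) (((k : ℝ) + 1) / N)) :
    |deriv (linErr N v) x| ≤ ∫ t in ((k : ℝ) / N)..(((k : ℝ) + 1) / N), |v'' t| := by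
  have hN' : (0 : ℝ) < N := by exact_mod_cast (by omega : 0 < N)
  rw [(hasDerivAt_linErr hk hv hx).deriv]
  obtain ⟨c, hc, h⟩ := exists_slope_eq (cell_lt hk) hv
  rw [h, cell_length hk, mul_inv_cancel_left₀ hN'.ne']
  exact abs_sub_le_integral_abs_deriv hv' hv'' (Set.Ioo_subset_Icc_self hx)
    (Set.Ioo_subset_Icc_self hc)

lemma abs_linErr_le_integral_deriv2 (hk : k < N)
    (hv : ∀ t, HasDerivAt v (v' t) t) (hv' : ∀ t, HasDerivAt v' (v'' t) t)
    (hv'' : Continuous v'') (hx : x ∈ Set.Ioo ((k : ℝ) / N) (((k : ℝ) + 1) / N)) :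
    |linErr N v x| ≤ (N : ℝ)⁻¹ * ∫ t in ((k : ℝ) / N)..(((k : ℝ) + 1) / N), |v'' t| := by
  have hN' : (0 : ℝ) < N := by exact_mod_cast (by omega : 0 < N)
  have hx' := Set.Ioo_subset_Icc_self hx
  rw [linErr, linInterp_eq_of_mem_cell hk v hx']
  obtain ⟨c, hc, h⟩ := exists_slope_eq (cell_lt hk) hv
  obtain ⟨d, hd, h'⟩ := exists_slope_eq hx.1 hv
  rw [h, cell_length hk]
  have hd' : d ∈ Set.Icc ((k : ℝ) / N) (((k : ℝ) + 1) / N) := ⟨hd.1.le, hd.2.le.trans hx'.2⟩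
  have h1 : v x - (v (k / N) + (N * x - k) * ((N : ℝ)⁻¹ * v' c))
      = (x - k / N) * (v' d - v' c) := by
    have : v x = v (k / N) + (x - k / N) * v' d := by linarith
    rw [this]
    field_simp
    ring
  rw [h1, abs_mul]
  refine mul_le_mul ?_ (abs_sub_le_integral_abs_deriv hv' hv'' hd'
    (Set.Ioo_subset_Icc_self hc)) (abs_nonneg _) (inv_pos.2 hN').le
  rw [abs_of_nonneg (by linarith [hx.1]), ← cell_length hk]
  linarith [hx.2]

end Cell

/-- A cellwise bound by an `L¹` norm gives a global bound in `L²`. -/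
lemma lintegral_sq_le_of_cell_bound {N : ℕ} (hN : 0 < N) {F g : ℝ → ℝ} (hg : Continuous g)
    {c : ℝ} (hF : ∀ k < N, ∀ x ∈ Set.Ioo ((k : ℝ) / N) (((k : ℝ) + 1) / N),
      |F x| ≤ c * ∫ t in ((k : ℝ) / N)..(((k : ℝ) + 1) / N), |g t|) :
    ∫⁻ x in Set.Ioo (0 : ℝ) 1, ENNReal.ofReal (F x ^ 2)
      ≤ ENNReal.ofReal ((c * (N : ℝ)⁻¹) ^ 2)
        * ∫⁻ x in Set.Ioo (0 : ℝ) 1, ENNReal.ofReal (g x ^ 2) := by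
  have hN' : (0 : ℝ) < N := by exact_mod_cast hN
  let cell : ℕ → Set ℝ := fun k => Set.Ico ((k : ℝ) / N) (((k : ℝ) + 1) / N)
  have hcell : ∀ k ∈ range N, ∫⁻ x in cell k, ENNReal.ofReal (F x ^ 2)
      ≤ ENNReal.ofReal ((c * (N : ℝ)⁻¹) ^ 2) * ∫⁻ x in cell k, ENNReal.ofReal (g x ^ 2) := by
    intro k hk
    have hk' : k < N := mem_range.1 hk
    have hlt := cell_lt hk'
    set a := (k : ℝ) / N
    set b := ((k : ℝ) + 1) / N
    have hlen : b - a = (N : ℝ)⁻¹ := cell_length hk'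
    have hG : ∫⁻ x in cell k, ENNReal.ofReal (g x ^ 2)
        = ENNReal.ofReal (∫ x in a..b, g x ^ 2) := by
      rw [intervalIntegral.integral_of_le hlt.le, ← integral_Ico_eq_integral_Ioc,
        ofReal_integral_eq_lintegral_ofReal]
      · exact ((hg.pow 2).integrableOn_Icc (a := a) (b := b)).mono_set Set.Ico_subset_Icc_self
      · exact Filter.Eventually.of_forall fun x => sq_nonneg _
    have hbound : ∀ x ∈ Set.Ioo a b, ENNReal.ofReal (F x ^ 2)
        ≤ ENNReal.ofReal (c ^ 2 * ((N : ℝ)⁻¹ * ∫ x in a..b, g x ^ 2)) := by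
      intro x hx
      apply ENNReal.ofReal_le_ofReal
      calc F x ^ 2 = |F x| ^ 2 := (sq_abs _).symm
        _ ≤ (c * ∫ t in a..b, |g t|) ^ 2 := by gcongr; exact hF k hk' x hx
        _ = c ^ 2 * (∫ t in a..b, |g t|) ^ 2 := by ring
        _ ≤ _ := by
          gcongr
          rw [← hlen]
          exact sq_integral_abs_le hlt hg
    rw [hG]
    calc ∫⁻ x in cell k, ENNReal.ofReal (F x ^ 2)
        = ∫⁻ x in Set.Ioo a b, ENNReal.ofReal (F x ^ 2) :=
          (setLIntegral_congr Ioo_ae_eq_Ico).symm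
      _ ≤ ∫⁻ _ in Set.Ioo a b, ENNReal.ofReal (c ^ 2 * ((N : ℝ)⁻¹ * ∫ x in a..b, g x ^ 2)) :=
          setLIntegral_mono' measurableSet_Ioo hbound
      _ = ENNReal.ofReal ((c * (N : ℝ)⁻¹) ^ 2) * ENNReal.ofReal (∫ x in a..b, g x ^ 2) := by
          rw [setLIntegral_const, Real.volume_Ioo, hlen, ← ENNReal.ofReal_mul (sq_nonneg _),
            ← ENNReal.ofReal_mul']
          · ring_nf
          · positivity
  have hcover : Set.Ioo (0 : ℝ) 1 ⊆ ⋃ k ∈ range N, cell k := by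
    intro x hx
    have hx0 : 0 ≤ (N : ℝ) * x := mul_nonneg hN'.le hx.1.le
    have h1 := Nat.floor_le hx0
    have h2 := Nat.lt_floor_add_one ((N : ℝ) * x)
    simp only [Set.mem_iUnion]
    refine ⟨⌊(N : ℝ) * x⌋₊, ?_, ?_, ?_⟩
    · rw [mem_range, Nat.floor_lt hx0]
      nlinarith [hx.2]
    · rw [div_le_iff₀ hN']; linarith
    · rw [lt_div_iff₀ hN']; linarith
  have hsub : (⋃ k ∈ range N, cell k) ⊆ Set.Ico (0 : ℝ) 1 := by
    intro x hx
    simp only [Set.mem_iUnion] at hx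
    obtain ⟨k, hk, h1, h2⟩ := hx
    have hk' : (k : ℝ) + 1 ≤ N := by exact_mod_cast mem_range.1 hk
    exact ⟨le_trans (by positivity) h1, h2.trans_le (by rw [div_le_one hN']; exact hk')⟩
  have hdisj : Set.PairwiseDisjoint (↑(range N) : Set ℕ) cell := by
    intro i _ j _ hij
    refine Set.disjoint_left.2 fun x hi hj => hij ?_
    obtain ⟨h1, h2⟩ := hi
    obtain ⟨h3, h4⟩ := hj
    rw [div_le_iff₀ hN'] at h1 h3
    rw [lt_div_iff₀ hN'] at h2 h4
    have h5 : (i : ℝ) < j + 1 := by linarith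
    have h6 : (j : ℝ) < i + 1 := by linarith
    norm_cast at h5 h6
    omega
  calc ∫⁻ x in Set.Ioo (0 : ℝ) 1, ENNReal.ofReal (F x ^ 2)
      ≤ ∫⁻ x in ⋃ k ∈ range N, cell k, ENNReal.ofReal (F x ^ 2) := lintegral_mono_set hcover
    _ = ∑ k ∈ range N, ∫⁻ x in cell k, ENNReal.ofReal (F x ^ 2) :=
        lintegral_biUnion_finset hdisj (fun _ _ => measurableSet_Ico) _
    _ ≤ ∑ k ∈ range N, ENNReal.ofReal ((c * (N : ℝ)⁻¹) ^ 2)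
          * ∫⁻ x in cell k, ENNReal.ofReal (g x ^ 2) := Finset.sum_le_sum hcell
    _ = ENNReal.ofReal ((c * (N : ℝ)⁻¹) ^ 2)
          * ∫⁻ x in ⋃ k ∈ range N, cell k, ENNReal.ofReal (g x ^ 2) := by
        rw [← Finset.mul_sum, lintegral_biUnion_finset hdisj (fun _ _ => measurableSet_Ico)]
    _ ≤ ENNReal.ofReal ((c * (N : ℝ)⁻¹) ^ 2)
          * ∫⁻ x in Set.Ico (0 : ℝ) 1, ENNReal.ofReal (g x ^ 2) := by
        gcongr
    _ = _ := by rw [setLIntegral_congr Ioo_ae_eq_Ico]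

lemma exists_mem_cell {N : ℕ} (hN : 0 < N) {x : ℝ} (hx : x ∈ Set.Ioo (0 : ℝ) 1)
    (hx' : x ∉ Set.range fun k : ℕ => (k : ℝ) / N) :
    ∃ k < N, x ∈ Set.Ioo ((k : ℝ) / N) (((k : ℝ) + 1) / N) := by
  have hN' : (0 : ℝ) < N := by exact_mod_cast hN
  have hx0 : 0 ≤ (N : ℝ) * x := mul_nonneg hN'.le hx.1.le
  have h1 := Nat.floor_le hx0
  have h2 := Nat.lt_floor_add_one ((N : ℝ) * x)
  refine ⟨⌊(N : ℝ) * x⌋₊, ?_, ?_, ?_⟩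
  · rw [Nat.floor_lt hx0]
    nlinarith [hx.2]
  · refine lt_of_le_of_ne ?_ fun h => hx' ⟨_, h⟩
    rw [div_le_iff₀ hN']; linarith
  · rw [lt_div_iff₀ hN']; linarith

lemma continuous_errX {N : ℕ} (hN : 0 < N) {w : ℝ × ℝ → ℝ} (hw : Continuous w) :
    Continuous (errX N w) := by
  unfold errX interpX
  have := continuous_hat hN
  fun_prop

lemma continuous_errY {N : ℕ} (hN : 0 < N) {w : ℝ × ℝ → ℝ} (hw : Continuous w) :
    Continuous (errY N w) := by
  unfold errY interpY
  have := continuous_hat hN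
  fun_prop

lemma continuous_interp {M K : ℕ} (hM : 0 < M) (hK : 0 < K) (w : ℝ × ℝ → ℝ) :
    Continuous (interp M K w) := by
  unfold interp
  have := continuous_hat hM
  have := continuous_hat hK
  fun_prop

lemma measurable_pderivX {w : ℝ × ℝ → ℝ} (hw : Continuous w) : Measurable (pderivX w) := by
  have h : Continuous (Function.uncurry fun y x : ℝ => w (x, y)) := hw.comp continuous_swap
  exact (measurable_deriv_with_param h).comp measurable_swap

lemma measurable_pderivY {w : ℝ × ℝ → ℝ} (hw : Continuous w) : Measurable (pderivY w) := by
  have h : Continuous (Function.uncurry fun x y : ℝ => w (x, y)) := hw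
  exact measurable_deriv_with_param h

lemma measurableSet_Omega2 : MeasurableSet Omega2 := measurableSet_Ioo.prod measurableSet_Ioo

lemma Omega2_subset_unitSquare : Omega2 ⊆ unitSquare :=
  Set.prod_mono Set.Ioo_subset_Icc_self Set.Ioo_subset_Icc_self

lemma isCompact_unitSquare : IsCompact unitSquare := isCompact_Icc.prod isCompact_Icc

lemma sqNorm_eq_iterated {F : ℝ × ℝ → ℝ} (hF : Measurable F) :
    sqNorm F = ∫⁻ y in Set.Ioo (0 : ℝ) 1, ∫⁻ x in Set.Ioo (0 : ℝ) 1,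
      ENNReal.ofReal (F (x, y) ^ 2) := by
  rw [sqNorm, Omega2, Measure.volume_eq_prod, ← Measure.prod_restrict, lintegral_prod_symm]
  exact (hF.pow_const 2).ennreal_ofReal.aemeasurable

lemma sqNorm_le_of_sections {F G : ℝ × ℝ → ℝ} (hF : Measurable F) (hG : Measurable G)
    {c : ℝ} (h : ∀ y, ∫⁻ x in Set.Ioo (0 : ℝ) 1, ENNReal.ofReal (F (x, y) ^ 2)
      ≤ ENNReal.ofReal c * ∫⁻ x in Set.Ioo (0 : ℝ) 1, ENNReal.ofReal (G (x, y) ^ 2)) :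
    sqNorm F ≤ ENNReal.ofReal c * sqNorm G := by
  rw [sqNorm_eq_iterated hF, sqNorm_eq_iterated hG, ← lintegral_const_mul' _ _ (by simp)]
  exact lintegral_mono h

lemma sqNorm_comp_swap {F : ℝ × ℝ → ℝ} (hF : Measurable F) :
    sqNorm (F ∘ Prod.swap) = sqNorm F := by
  rw [sqNorm_eq_iterated (hF.comp measurable_swap), sqNorm, Omega2, Measure.volume_eq_prod,
    ← Measure.prod_restrict, lintegral_prod]
  · rfl
  · exact (hF.pow_const 2).ennreal_ofReal.aemeasurable

lemma sqNorm_errX_le_deriv {N : ℕ} (hN : 0 < N) {w w' : ℝ × ℝ → ℝ} (hw : Continuous w)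
    (hw' : Continuous w') (h : ∀ p : ℝ × ℝ, HasDerivAt (fun x => w (x, p.2)) (w' p) p.1) :
    sqNorm (errX N w) ≤ ENNReal.ofReal ((2 * (N : ℝ)⁻¹) ^ 2) * sqNorm w' :=
  sqNorm_le_of_sections (continuous_errX hN hw).measurable hw'.measurable fun y =>
    lintegral_sq_le_of_cell_bound hN (F := linErr N fun x => w (x, y))
      (g := fun x => w' (x, y)) (by fun_prop) fun _ hk _ hx =>
        abs_linErr_le_integral_deriv hk (fun t => h (t, y)) (by fun_prop) hx

lemma sqNorm_errX_le_deriv2 {N : ℕ} (hN : 0 < N) {w w' w'' : ℝ × ℝ → ℝ} (hw : Continuous w)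
    (hw'' : Continuous w'') (h : ∀ p : ℝ × ℝ, HasDerivAt (fun x => w (x, p.2)) (w' p) p.1)
    (h' : ∀ p : ℝ × ℝ, HasDerivAt (fun x => w' (x, p.2)) (w'' p) p.1) :
    sqNorm (errX N w) ≤ ENNReal.ofReal (((N : ℝ)⁻¹ * (N : ℝ)⁻¹) ^ 2) * sqNorm w'' :=
  sqNorm_le_of_sections (continuous_errX hN hw).measurable hw''.measurable fun y =>
    lintegral_sq_le_of_cell_bound hN (F := linErr N fun x => w (x, y))
      (g := fun x => w'' (x, y)) (by fun_prop) fun _ hk _ hx =>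
        abs_linErr_le_integral_deriv2 hk (fun t => h (t, y)) (fun t => h' (t, y))
          (by fun_prop) hx

lemma sqNorm_pderivX_errX_le_deriv2 {N : ℕ} (hN : 0 < N) {w w' w'' : ℝ × ℝ → ℝ}
    (hw : Continuous w) (hw'' : Continuous w'')
    (h : ∀ p : ℝ × ℝ, HasDerivAt (fun x => w (x, p.2)) (w' p) p.1)
    (h' : ∀ p : ℝ × ℝ, HasDerivAt (fun x => w' (x, p.2)) (w'' p) p.1) :
    sqNorm (pderivX (errX N w)) ≤ ENNReal.ofReal ((1 * (N : ℝ)⁻¹) ^ 2) * sqNorm w'' :=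
  sqNorm_le_of_sections (measurable_pderivX (continuous_errX hN hw)) hw''.measurable fun y =>
    lintegral_sq_le_of_cell_bound hN (F := deriv (linErr N fun x => w (x, y)))
      (g := fun x => w'' (x, y)) (by fun_prop) fun _ hk _ hx => by
        rw [one_mul]
        exact abs_deriv_linErr_le_integral_deriv2 hk (fun t => h (t, y)) (fun t => h' (t, y))
          (by fun_prop) hx

lemma sqNorm_errY_le_deriv {N : ℕ} (hN : 0 < N) {w w' : ℝ × ℝ → ℝ} (hw : Continuous w)
    (hw' : Continuous w') (h : ∀ p : ℝ × ℝ, HasDerivAt (fun y => w (p.1, y)) (w' p) p.2) :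
    sqNorm (errY N w) ≤ ENNReal.ofReal ((2 * (N : ℝ)⁻¹) ^ 2) * sqNorm w' := by
  rw [← sqNorm_comp_swap (continuous_errY hN hw).measurable, ← sqNorm_comp_swap hw'.measurable]
  exact sqNorm_errX_le_deriv hN (w := w ∘ Prod.swap) (hw.comp continuous_swap)
    (hw'.comp continuous_swap) fun p => h p.swap

lemma sqNorm_errY_le_deriv2 {N : ℕ} (hN : 0 < N) {w w' w'' : ℝ × ℝ → ℝ} (hw : Continuous w)
    (hw'' : Continuous w'') (h : ∀ p : ℝ × ℝ, HasDerivAt (fun y => w (p.1, y)) (w' p) p.2)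
    (h' : ∀ p : ℝ × ℝ, HasDerivAt (fun y => w' (p.1, y)) (w'' p) p.2) :
    sqNorm (errY N w) ≤ ENNReal.ofReal (((N : ℝ)⁻¹ * (N : ℝ)⁻¹) ^ 2) * sqNorm w'' := by
  rw [← sqNorm_comp_swap (continuous_errY hN hw).measurable, ← sqNorm_comp_swap hw''.measurable]
  exact sqNorm_errX_le_deriv2 hN (w := w ∘ Prod.swap) (w' := w' ∘ Prod.swap)
    (hw.comp continuous_swap) (hw''.comp continuous_swap) (fun p => h p.swap)
    fun p => h' p.swap

section Partials

variable {u : ℝ × ℝ → ℝ}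

lemma hasDerivAt_sectionX (hu : Differentiable ℝ u) (p : ℝ × ℝ) :
    HasDerivAt (fun x => u (x, p.2)) (fderiv ℝ u p (1, 0)) p.1 :=
  (hu p).hasFDerivAt.comp_hasDerivAt p.1
    ((hasDerivAt_id p.1).prodMk (hasDerivAt_const p.1 p.2))

lemma hasDerivAt_sectionY (hu : Differentiable ℝ u) (p : ℝ × ℝ) :
    HasDerivAt (fun y => u (p.1, y)) (fderiv ℝ u p (0, 1)) p.2 :=
  (hu p).hasFDerivAt.comp_hasDerivAt p.2
    ((hasDerivAt_const p.2 p.1).prodMk (hasDerivAt_id p.2))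

lemma pderivX_eq_fderiv (hu : Differentiable ℝ u) :
    pderivX u = fun p => fderiv ℝ u p (1, 0) :=
  funext fun p => (hasDerivAt_sectionX hu p).deriv

lemma pderivY_eq_fderiv (hu : Differentiable ℝ u) :
    pderivY u = fun p => fderiv ℝ u p (0, 1) :=
  funext fun p => (hasDerivAt_sectionY hu p).deriv

lemma hasDerivAt_pderivX (hu : Differentiable ℝ u) (p : ℝ × ℝ) :
    HasDerivAt (fun x => u (x, p.2)) (pderivX u p) p.1 := by
  rw [pderivX_eq_fderiv hu]
  exact hasDerivAt_sectionX hu p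

lemma hasDerivAt_pderivY (hu : Differentiable ℝ u) (p : ℝ × ℝ) :
    HasDerivAt (fun y => u (p.1, y)) (pderivY u p) p.2 := by
  rw [pderivY_eq_fderiv hu]
  exact hasDerivAt_sectionY hu p

lemma contDiff_pderivX {n : ℕ} (hu : ContDiff ℝ (n + 1 : ℕ) u) : ContDiff ℝ n (pderivX u) := by
  rw [pderivX_eq_fderiv (hu.differentiable (by simp))]
  exact (hu.fderiv_right (m := n) (by norm_cast)).clm_apply contDiff_const

lemma contDiff_pderivY {n : ℕ} (hu : ContDiff ℝ (n + 1 : ℕ) u) : ContDiff ℝ n (pderivY u) := by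
  rw [pderivY_eq_fderiv (hu.differentiable (by simp))]
  exact (hu.fderiv_right (m := n) (by norm_cast)).clm_apply contDiff_const

lemma pderivX_pderivY_comm (hu : ContDiff ℝ (2 : ℕ) u) :
    pderivX (pderivY u) = pderivY (pderivX u) := by
  have hd : Differentiable ℝ u := hu.differentiable (by simp)
  have hd' : Differentiable ℝ (fderiv ℝ u) :=
    (hu.fderiv_right (m := (1 : ℕ)) (by norm_cast)).differentiable (by simp)
  have hX := (contDiff_pderivX (n := 1) hu).differentiable (by simp)
  have hY := (contDiff_pderivY (n := 1) hu).differentiable (by simp)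
  rw [pderivX_eq_fderiv hY, pderivY_eq_fderiv hX, pderivX_eq_fderiv hd, pderivY_eq_fderiv hd]
  funext p
  rw [fderiv_clm_apply (hd' p) (by fun_prop), fderiv_clm_apply (hd' p) (by fun_prop)]
  simpa using (hu.contDiffAt (x := p)).isSymmSndFDerivAt (by simp) (1, 0) (0, 1)

lemma pderivY_pderivY_pderivX_pderivX (hu : ContDiff ℝ (4 : ℕ) u) :
    pderivY (pderivY (pderivX (pderivX u))) = uxxyy u := by
  have hx : ContDiff ℝ (3 : ℕ) (pderivX u) := contDiff_pderivX hu
  have hy : ContDiff ℝ (3 : ℕ) (pderivY u) := contDiff_pderivY hu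
  have hyx : ContDiff ℝ (2 : ℕ) (pderivY (pderivX u)) := contDiff_pderivY hx
  rw [uxxyy, ← pderivX_pderivY_comm (hx.of_le (by norm_cast)), ← pderivX_pderivY_comm hyx,
    ← pderivX_pderivY_comm (hu.of_le (by norm_cast)),
    ← pderivX_pderivY_comm (hy.of_le (by norm_cast))]

lemma hasDerivAt_errY (K : ℕ) (hu : Differentiable ℝ u) (p : ℝ × ℝ) :
    HasDerivAt (fun x => errY K u (x, p.2)) (errY K (pderivX u) p) p.1 := by
  refine (hasDerivAt_pderivX hu p).sub (HasDerivAt.fun_sum fun j _ => ?_)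
  exact (hasDerivAt_pderivX hu (p.1, (j : ℝ) / K)).mul_const (hat K j p.2)

lemma differentiableAt_errX {N : ℕ} (hN : 0 < N) {w w' : ℝ × ℝ → ℝ}
    (h : ∀ p : ℝ × ℝ, HasDerivAt (fun x => w (x, p.2)) (w' p) p.1) {p : ℝ × ℝ}
    (hp : p.1 ∈ Set.Ioo (0 : ℝ) 1) (hp' : p.1 ∉ Set.range fun k : ℕ => (k : ℝ) / N) :
    DifferentiableAt ℝ (fun x => errX N w (x, p.2)) p.1 := by
  obtain ⟨k, hk, hx⟩ := exists_mem_cell hN hp hp'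
  exact (hasDerivAt_linErr hk (fun t => h (t, p.2)) hx).differentiableAt

end Partials

lemma errX_errY (M K : ℕ) (u : ℝ × ℝ → ℝ) (p : ℝ × ℝ) :
    errX M (errY K u) p = u p - interpX M u p - interpY K u p + interp M K u p := by
  simp only [errX, errY, interpX, interpY, interp, sub_mul, Finset.sum_sub_distrib,
    Finset.sum_mul]
  have : ∀ i j : ℕ, u ((i : ℝ) / M, (j : ℝ) / K) * hat K j p.2 * hat M i p.1
      = u ((i : ℝ) / M, (j : ℝ) / K) * hat M i p.1 * hat K j p.2 := fun i j => by ring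
  simp only [this]
  ring

/-- The two-scale error as a combination of one-dimensional errors and products thereof. -/
lemma sub_twoScale_eq (N σ : ℕ) (u : ℝ × ℝ → ℝ) (p : ℝ × ℝ) :
    u p - twoScale N σ u p = errX N u p + errY N u p + errX σ (errY σ u) p
      - errX σ (errY N u) p - errX N (errY σ u) p := by
  simp only [errX_errY, twoScale]
  simp only [errX, errY]
  ring

lemma ae_fst_notMem_range (N : ℕ) :
    ∀ᵐ p : ℝ × ℝ, p.1 ∉ Set.range fun k : ℕ => (k : ℝ) / N := by
  rw [Measure.volume_eq_prod]
  exact Measure.quasiMeasurePreserving_fst.ae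
    ((Set.countable_range _).ae_notMem (volume : Measure ℝ))

/-- The partial derivative of the two-scale error, away from the grid lines. -/
lemma pderivX_sub_twoScale_ae {N σ : ℕ} (hN : 0 < N) (hσ : 0 < σ) {u : ℝ × ℝ → ℝ}
    (hu : Differentiable ℝ u) :
    ∀ᵐ p ∂(volume.restrict Omega2), pderivX (fun p => u p - twoScale N σ u p) p
      = pderivX (errX N u) p + errY N (pderivX u) p + pderivX (errX σ (errY σ u)) p
        - pderivX (errX σ (errY N u)) p - pderivX (errX N (errY σ u)) p := by
  filter_upwards [ae_restrict_mem measurableSet_Omega2,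
    ae_restrict_of_ae (ae_fst_notMem_range N), ae_restrict_of_ae (ae_fst_notMem_range σ)]
    with p hp hpN hpσ
  have hX : ∀ {M : ℕ}, 0 < M → (p.1 ∉ Set.range fun k : ℕ => (k : ℝ) / M) → ∀ K : ℕ,
      HasDerivAt (fun x => errX M (errY K u) (x, p.2)) (pderivX (errX M (errY K u)) p) p.1 :=
    fun hM h K => (differentiableAt_errX hM (hasDerivAt_errY K hu) hp.1 h).hasDerivAt
  have hXN : HasDerivAt (fun x => errX N u (x, p.2)) (pderivX (errX N u) p) p.1 :=
    (differentiableAt_errX hN (hasDerivAt_pderivX hu) hp.1 hpN).hasDerivAt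
  have := ((((hXN.add (hasDerivAt_errY N hu p)).add (hX hσ hpσ σ)).sub (hX hσ hpσ N)).sub
    (hX hN hpN σ)).deriv
  rw [← this]
  simp only [pderivX, sub_twoScale_eq]
  rfl

lemma sqNorm_eq_ofReal_L2norm {v : ℝ × ℝ → ℝ} (hv : Continuous v) :
    sqNorm v = ENNReal.ofReal (L2norm v ^ 2) := by
  have hint : IntegrableOn (fun p => v p ^ 2) Omega2 :=
    ((hv.pow 2).continuousOn.integrableOn_compact isCompact_unitSquare).mono_set
      Omega2_subset_unitSquare
  rw [L2norm, Real.sq_sqrt (integral_nonneg fun _ => sq_nonneg _), sqNorm,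
    ofReal_integral_eq_lintegral_ofReal hint (Filter.Eventually.of_forall fun _ => sq_nonneg _)]

/-- Quadratic triangle inequality for a combination of five functions. -/
lemma sqNorm_le_of_ae_eq_five {F f₁ f₂ f₃ f₄ f₅ : ℝ × ℝ → ℝ}
    (h₁ : Measurable f₁) (h₂ : Measurable f₂) (h₃ : Measurable f₃) (h₄ : Measurable f₄)
    (hF : ∀ᵐ p ∂(volume.restrict Omega2), F p = f₁ p + f₂ p + f₃ p - f₄ p - f₅ p)
    {b₁ b₂ b₃ b₄ b₅ : ℝ} (hb₁ : 0 ≤ b₁) (hb₂ : 0 ≤ b₂) (hb₃ : 0 ≤ b₃) (hb₄ : 0 ≤ b₄)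
    (hb₅ : 0 ≤ b₅) (k₁ : sqNorm f₁ ≤ ENNReal.ofReal b₁) (k₂ : sqNorm f₂ ≤ ENNReal.ofReal b₂)
    (k₃ : sqNorm f₃ ≤ ENNReal.ofReal b₃) (k₄ : sqNorm f₄ ≤ ENNReal.ofReal b₄)
    (k₅ : sqNorm f₅ ≤ ENNReal.ofReal b₅) :
    sqNorm F ≤ ENNReal.ofReal (5 * (b₁ + b₂ + b₃ + b₄ + b₅)) := by
  have hsq : ∀ a b c d e : ℝ,
      (a + b + c - d - e) ^ 2 ≤ 5 * (a ^ 2 + b ^ 2 + c ^ 2 + d ^ 2 + e ^ 2) := by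
    intro a b c d e
    nlinarith [sq_nonneg (a - b), sq_nonneg (a - c), sq_nonneg (a + d), sq_nonneg (a + e),
      sq_nonneg (b - c), sq_nonneg (b + d), sq_nonneg (b + e), sq_nonneg (c + d),
      sq_nonneg (c + e), sq_nonneg (d - e)]
  calc sqNorm F
      ≤ ∫⁻ p in Omega2, ENNReal.ofReal 5 * (ENNReal.ofReal (f₁ p ^ 2)
          + (ENNReal.ofReal (f₂ p ^ 2) + (ENNReal.ofReal (f₃ p ^ 2)
            + (ENNReal.ofReal (f₄ p ^ 2) + ENNReal.ofReal (f₅ p ^ 2))))) := by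
        refine lintegral_mono_ae ?_
        filter_upwards [hF] with p hp
        rw [hp, ← ENNReal.ofReal_add (by positivity) (by positivity),
          ← ENNReal.ofReal_add (by positivity) (by positivity),
          ← ENNReal.ofReal_add (by positivity) (by positivity),
          ← ENNReal.ofReal_add (by positivity) (by positivity),
          ← ENNReal.ofReal_mul (by norm_num)]
        refine ENNReal.ofReal_le_ofReal ((hsq _ _ _ _ _).trans_eq ?_)
        ring
    _ = ENNReal.ofReal 5
          * (sqNorm f₁ + (sqNorm f₂ + (sqNorm f₃ + (sqNorm f₄ + sqNorm f₅)))) := by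
        rw [lintegral_const_mul' _ _ (by simp), lintegral_add_left (by fun_prop),
          lintegral_add_left (by fun_prop), lintegral_add_left (by fun_prop),
          lintegral_add_left (by fun_prop)]
        rfl
    _ ≤ ENNReal.ofReal 5 * (ENNReal.ofReal b₁ + (ENNReal.ofReal b₂ + (ENNReal.ofReal b₃
          + (ENNReal.ofReal b₄ + ENNReal.ofReal b₅)))) := by gcongr
    _ = _ := by
        rw [← ENNReal.ofReal_add (by positivity) (by positivity),
          ← ENNReal.ofReal_add (by positivity) (by positivity),
          ← ENNReal.ofReal_add (by positivity) (by positivity),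
          ← ENNReal.ofReal_add (by positivity) (by positivity),
          ← ENNReal.ofReal_mul (by norm_num)]
        congr 1
        ring

lemma L2norm_nonneg (v : ℝ × ℝ → ℝ) : 0 ≤ L2norm v := Real.sqrt_nonneg _

lemma sqNorm_le_ofReal_of_le {F G : ℝ × ℝ → ℝ} (hG : Continuous G) {c d : ℝ} (hc : 0 ≤ c)
    (hcd : c ≤ d) (h : sqNorm F ≤ ENNReal.ofReal c * sqNorm G) :
    sqNorm F ≤ ENNReal.ofReal (d * L2norm G ^ 2) := by
  refine h.trans ?_
  rw [sqNorm_eq_ofReal_L2norm hG, ← ENNReal.ofReal_mul hc]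
  exact ENNReal.ofReal_le_ofReal (mul_le_mul_of_nonneg_right hcd (sq_nonneg _))

lemma inv_natCast_le_one (M : ℕ) : (M : ℝ)⁻¹ ≤ 1 := Nat.cast_inv_le_one M

section TwoScale

variable {u : ℝ × ℝ → ℝ} {N σ : ℕ}

lemma sqNorm_errY_pderivX_pderivX_le {K : ℕ} (hu : ContDiff ℝ (4 : ℕ) u) (hσ : 0 < σ)
    (hK : σ ≤ K) : sqNorm (errY K (pderivX (pderivX u)))
      ≤ ENNReal.ofReal (((σ : ℝ)⁻¹) ^ 4 * L2norm (uxxyy u) ^ 2) := by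
  have hxx : ContDiff ℝ (2 : ℕ) (pderivX (pderivX u)) := contDiff_pderivX (contDiff_pderivX hu)
  have hyxx : ContDiff ℝ (1 : ℕ) (pderivY (pderivX (pderivX u))) := contDiff_pderivY hxx
  have hyyxx : ContDiff ℝ (0 : ℕ) (pderivY (pderivY (pderivX (pderivX u)))) :=
    contDiff_pderivY hyxx
  rw [← pderivY_pderivY_pderivX_pderivX hu]
  refine sqNorm_le_ofReal_of_le hyyxx.continuous (by positivity) ?_
    (sqNorm_errY_le_deriv2 (hσ.trans_le hK) hxx.continuous hyyxx.continuous
      (hasDerivAt_pderivY (hxx.differentiable (by simp)))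
      (hasDerivAt_pderivY (hyxx.differentiable (by simp))))
  calc ((K : ℝ)⁻¹ * (K : ℝ)⁻¹) ^ 2 = ((K : ℝ)⁻¹) ^ 4 := by ring
    _ ≤ _ := by gcongr

lemma hasDerivAt_errY_pderivX (hu : ContDiff ℝ (4 : ℕ) u) (K : ℕ) (p : ℝ × ℝ) :
    HasDerivAt (fun x => errY K (pderivX u) (x, p.2)) (errY K (pderivX (pderivX u)) p) p.1 :=
  hasDerivAt_errY K ((contDiff_pderivX (n := 3) hu).differentiable (by simp)) p

lemma sqNorm_pderivX_errX_errY_le {M K : ℕ} (hu : ContDiff ℝ (4 : ℕ) u) (hσ : 0 < σ)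
    (hM : σ ≤ M) (hK : σ ≤ K) : sqNorm (pderivX (errX M (errY K u)))
      ≤ ENNReal.ofReal (((σ : ℝ)⁻¹) ^ 6 * L2norm (uxxyy u) ^ 2) := by
  have hxx : ContDiff ℝ (2 : ℕ) (pderivX (pderivX u)) := contDiff_pderivX (contDiff_pderivX hu)
  have hK0 := hσ.trans_le hK
  have h := sqNorm_pderivX_errX_le_deriv2 (hσ.trans_le hM) (continuous_errY hK0 hu.continuous)
    (continuous_errY hK0 hxx.continuous) (hasDerivAt_errY K (hu.differentiable (by simp)))
    (hasDerivAt_errY_pderivX hu K)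
  refine h.trans ((mul_le_mul_right (sqNorm_errY_pderivX_pderivX_le hu hσ hK) _).trans ?_)
  rw [← ENNReal.ofReal_mul (by positivity)]
  apply ENNReal.ofReal_le_ofReal
  calc (1 * (M : ℝ)⁻¹) ^ 2 * (((σ : ℝ)⁻¹) ^ 4 * L2norm (uxxyy u) ^ 2)
      ≤ (1 * (σ : ℝ)⁻¹) ^ 2 * (((σ : ℝ)⁻¹) ^ 4 * L2norm (uxxyy u) ^ 2) := by gcongr
    _ = _ := by ring

lemma sqNorm_errX_errY_le {M K : ℕ} (hu : ContDiff ℝ (4 : ℕ) u) (hσ : 0 < σ)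
    (hM : σ ≤ M) (hK : σ ≤ K) : sqNorm (errX M (errY K u))
      ≤ ENNReal.ofReal (((σ : ℝ)⁻¹) ^ 6 * L2norm (uxxyy u) ^ 2) := by
  have hxx : ContDiff ℝ (2 : ℕ) (pderivX (pderivX u)) := contDiff_pderivX (contDiff_pderivX hu)
  have hK0 := hσ.trans_le hK
  have h := sqNorm_errX_le_deriv2 (hσ.trans_le hM) (continuous_errY hK0 hu.continuous)
    (continuous_errY hK0 hxx.continuous) (hasDerivAt_errY K (hu.differentiable (by simp)))
    (hasDerivAt_errY_pderivX hu K)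
  refine h.trans ((mul_le_mul_right (sqNorm_errY_pderivX_pderivX_le hu hσ hK) _).trans ?_)
  rw [← ENNReal.ofReal_mul (by positivity)]
  apply ENNReal.ofReal_le_ofReal
  calc ((M : ℝ)⁻¹ * (M : ℝ)⁻¹) ^ 2 * (((σ : ℝ)⁻¹) ^ 4 * L2norm (uxxyy u) ^ 2)
      ≤ ((σ : ℝ)⁻¹ * 1) ^ 2 * (((σ : ℝ)⁻¹) ^ 4 * L2norm (uxxyy u) ^ 2) := by
        gcongr
        exact inv_natCast_le_one M
    _ = _ := by ring

lemma inv_mul_inv_sq_le (M : ℕ) : ((M : ℝ)⁻¹ * (M : ℝ)⁻¹) ^ 2 ≤ ((M : ℝ)⁻¹) ^ 2 := by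
  have h1 := inv_natCast_le_one M
  gcongr
  exact mul_le_of_le_one_left (by positivity) h1

lemma sqNorm_pderivX_sub_twoScale_le (hu : ContDiff ℝ (4 : ℕ) u) (hσ : 0 < σ) (hσN : σ ≤ N) :
    sqNorm (pderivX fun p => u p - twoScale N σ u p)
      ≤ ENNReal.ofReal (5 * (((N : ℝ)⁻¹) ^ 2 * L2norm (pderivX (pderivX u)) ^ 2
        + 4 * ((N : ℝ)⁻¹) ^ 2 * L2norm (pderivX (pderivY u)) ^ 2
        + 3 * (((σ : ℝ)⁻¹) ^ 6 * L2norm (uxxyy u) ^ 2))) := by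
  have hN := hσ.trans_le hσN
  have hc := hu.continuous
  have hd := hu.differentiable (by simp)
  have hx : ContDiff ℝ (3 : ℕ) (pderivX u) := contDiff_pderivX hu
  have hxx : ContDiff ℝ (2 : ℕ) (pderivX (pderivX u)) := contDiff_pderivX hx
  have hyx : ContDiff ℝ (2 : ℕ) (pderivY (pderivX u)) := contDiff_pderivY hx
  have hdx := hx.differentiable (by simp)
  have hmeas : ∀ M K : ℕ, 0 < M → 0 < K → Measurable (pderivX (errX M (errY K u))) :=
    fun M K hM hK => measurable_pderivX (continuous_errX hM (continuous_errY hK hc))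
  have hX := sqNorm_le_ofReal_of_le hxx.continuous (by positivity) (le_refl _)
    (sqNorm_pderivX_errX_le_deriv2 hN hc hxx.continuous (hasDerivAt_pderivX hd)
      (hasDerivAt_pderivX hdx))
  have hY := sqNorm_le_ofReal_of_le hyx.continuous (by positivity) (le_refl _)
    (sqNorm_errY_le_deriv hN hx.continuous hyx.continuous (hasDerivAt_pderivY hdx))
  refine (sqNorm_le_of_ae_eq_five (measurable_pderivX (continuous_errX hN hc))
    (continuous_errY hN hx.continuous).measurable (hmeas σ σ hσ hσ) (hmeas σ N hσ hN)
    (pderivX_sub_twoScale_ae hN hσ hd) (by positivity) (by positivity) (by positivity)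
    (by positivity) (by positivity) hX hY (sqNorm_pderivX_errX_errY_le hu hσ le_rfl le_rfl)
    (sqNorm_pderivX_errX_errY_le hu hσ le_rfl hσN)
    (sqNorm_pderivX_errX_errY_le hu hσ hσN le_rfl)).trans_eq ?_
  rw [pderivX_pderivY_comm (hu.of_le (by norm_cast))]
  congr 1
  ring

lemma sqNorm_sub_twoScale_le (hu : ContDiff ℝ (4 : ℕ) u) (hσ : 0 < σ) (hσN : σ ≤ N) :
    sqNorm (fun p => u p - twoScale N σ u p)
      ≤ ENNReal.ofReal (5 * (((N : ℝ)⁻¹) ^ 2 * L2norm (pderivX (pderivX u)) ^ 2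
        + ((N : ℝ)⁻¹) ^ 2 * L2norm (pderivY (pderivY u)) ^ 2
        + 3 * (((σ : ℝ)⁻¹) ^ 6 * L2norm (uxxyy u) ^ 2))) := by
  have hN := hσ.trans_le hσN
  have hc := hu.continuous
  have hd := hu.differentiable (by simp)
  have hx : ContDiff ℝ (3 : ℕ) (pderivX u) := contDiff_pderivX hu
  have hy : ContDiff ℝ (3 : ℕ) (pderivY u) := contDiff_pderivY hu
  have hxx : ContDiff ℝ (2 : ℕ) (pderivX (pderivX u)) := contDiff_pderivX hx
  have hyy : ContDiff ℝ (2 : ℕ) (pderivY (pderivY u)) := contDiff_pderivY hy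
  have hmeas : ∀ M K : ℕ, 0 < M → 0 < K → Measurable (errX M (errY K u)) :=
    fun M K hM hK => (continuous_errX hM (continuous_errY hK hc)).measurable
  have hX := sqNorm_le_ofReal_of_le hxx.continuous (by positivity) (inv_mul_inv_sq_le N)
    (sqNorm_errX_le_deriv2 hN hc hxx.continuous (hasDerivAt_pderivX hd)
      (hasDerivAt_pderivX (hx.differentiable (by simp))))
  have hY := sqNorm_le_ofReal_of_le hyy.continuous (by positivity) (inv_mul_inv_sq_le N)
    (sqNorm_errY_le_deriv2 hN hc hyy.continuous (hasDerivAt_pderivY hd)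
      (hasDerivAt_pderivY (hy.differentiable (by simp))))
  refine (sqNorm_le_of_ae_eq_five (continuous_errX hN hc).measurable
    (continuous_errY hN hc).measurable (hmeas σ σ hσ hσ) (hmeas σ N hσ hN)
    (Filter.Eventually.of_forall (sub_twoScale_eq N σ u)) (by positivity) (by positivity)
    (by positivity) (by positivity) (by positivity) hX hY
    (sqNorm_errX_errY_le hu hσ le_rfl le_rfl) (sqNorm_errX_errY_le hu hσ le_rfl hσN)
    (sqNorm_errX_errY_le hu hσ hσN le_rfl)).trans_eq ?_
  congr 1
  ring

lemma interp_comp_swap (M K : ℕ) (u : ℝ × ℝ → ℝ) (p : ℝ × ℝ) :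
    interp M K (u ∘ Prod.swap) p = interp K M u p.swap := by
  simp only [interp, Function.comp_apply, Prod.swap_prod_mk, Prod.fst_swap, Prod.snd_swap]
  rw [Finset.sum_comm]
  refine Finset.sum_congr rfl fun i _ => Finset.sum_congr rfl fun j _ => ?_
  ring

lemma twoScale_comp_swap (N σ : ℕ) (u : ℝ × ℝ → ℝ) (p : ℝ × ℝ) :
    twoScale N σ (u ∘ Prod.swap) p = twoScale N σ u p.swap := by
  simp only [twoScale, interp_comp_swap]
  ring

lemma pderivX_comp_swap (w : ℝ × ℝ → ℝ) : pderivX (w ∘ Prod.swap) = pderivY w ∘ Prod.swap := rfl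

lemma pderivY_comp_swap (w : ℝ × ℝ → ℝ) : pderivY (w ∘ Prod.swap) = pderivX w ∘ Prod.swap := rfl

lemma L2norm_comp_swap {v : ℝ × ℝ → ℝ} (hv : Continuous v) :
    L2norm (v ∘ Prod.swap) = L2norm v := by
  have h := sqNorm_comp_swap hv.measurable
  rw [sqNorm_eq_ofReal_L2norm hv, sqNorm_eq_ofReal_L2norm (hv.comp continuous_swap),
    ENNReal.ofReal_eq_ofReal_iff (sq_nonneg _) (sq_nonneg _)] at h
  exact (sq_eq_sq₀ (L2norm_nonneg _) (L2norm_nonneg _)).1 h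

lemma continuous_sub_twoScale (hu : Continuous u) (hN : 0 < N) (hσ : 0 < σ) :
    Continuous fun p => u p - twoScale N σ u p :=
  hu.sub (((continuous_interp hN hσ u).add (continuous_interp hσ hN u)).sub
    (continuous_interp hσ hσ u))

lemma sqNorm_pderivY_sub_twoScale_le (hu : ContDiff ℝ (4 : ℕ) u) (hσ : 0 < σ) (hσN : σ ≤ N) :
    sqNorm (pderivY fun p => u p - twoScale N σ u p)
      ≤ ENNReal.ofReal (5 * (((N : ℝ)⁻¹) ^ 2 * L2norm (pderivY (pderivY u)) ^ 2
        + 4 * ((N : ℝ)⁻¹) ^ 2 * L2norm (pderivX (pderivY u)) ^ 2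
        + 3 * (((σ : ℝ)⁻¹) ^ 6 * L2norm (uxxyy u) ^ 2))) := by
  have hN := hσ.trans_le hσN
  have hx : ContDiff ℝ (3 : ℕ) (pderivX u) := contDiff_pderivX hu
  have hy : ContDiff ℝ (3 : ℕ) (pderivY u) := contDiff_pderivY hu
  have hyx : ContDiff ℝ (2 : ℕ) (pderivY (pderivX u)) := contDiff_pderivY hx
  have hyy : ContDiff ℝ (2 : ℕ) (pderivY (pderivY u)) := contDiff_pderivY hy
  have hxyy : ContDiff ℝ (1 : ℕ) (pderivX (pderivY (pderivY u))) := contDiff_pderivX hyy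
  have hxxyy : ContDiff ℝ (0 : ℕ) (uxxyy u) := contDiff_pderivX hxyy
  have hus : ContDiff ℝ (4 : ℕ) (u ∘ Prod.swap) := hu.comp (contDiff_snd.prodMk contDiff_fst)
  have h := sqNorm_pderivX_sub_twoScale_le hus hσ hσN
  have herr : (fun p => (u ∘ Prod.swap) p - twoScale N σ (u ∘ Prod.swap) p)
      = (fun p => u p - twoScale N σ u p) ∘ Prod.swap := by
    funext p
    simp only [twoScale_comp_swap, Function.comp_apply]
  rw [herr, pderivX_comp_swap, sqNorm_comp_swap
      (measurable_pderivY (continuous_sub_twoScale hu.continuous hN hσ)),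
    ← pderivY_pderivY_pderivX_pderivX hus] at h
  simp only [pderivX_comp_swap, pderivY_comp_swap] at h
  rwa [L2norm_comp_swap hyy.continuous, L2norm_comp_swap hyx.continuous,
    ← pderivX_pderivY_comm (hu.of_le (by norm_cast)), ← uxxyy,
    L2norm_comp_swap hxxyy.continuous] at h

end TwoScale

lemma energyNorm_le_of_sqNorm_le {v : ℝ × ℝ → ℝ} (hv : Continuous v) {a b c d : ℝ}
    (ha : 0 ≤ a) (hb : 0 ≤ b) (hc : 0 ≤ c) (hd : 0 ≤ d)
    (hX : sqNorm (pderivX v) ≤ ENNReal.ofReal a) (hY : sqNorm (pderivY v) ≤ ENNReal.ofReal b)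
    (h : sqNorm v ≤ ENNReal.ofReal c) (habc : a + b + c ≤ d ^ 2) : energyNorm v ≤ d := by
  have hmX := measurable_pderivX hv
  have hmY := measurable_pderivY hv
  have hm := hv.measurable
  rw [energyNorm, Real.sqrt_le_left hd, integral_eq_lintegral_of_nonneg_ae
    (Filter.Eventually.of_forall fun p => by positivity)
    (by fun_prop)]
  refine ENNReal.toReal_le_of_le_ofReal (sq_nonneg d) ?_
  calc ∫⁻ p in Omega2, ENNReal.ofReal (pderivX v p ^ 2 + pderivY v p ^ 2 + v p ^ 2)
      = ∫⁻ p in Omega2, (ENNReal.ofReal (pderivX v p ^ 2) + ENNReal.ofReal (pderivY v p ^ 2)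
          + ENNReal.ofReal (v p ^ 2)) := by
        refine lintegral_congr fun p => ?_
        rw [ENNReal.ofReal_add (by positivity) (by positivity),
          ENNReal.ofReal_add (by positivity) (by positivity)]
    _ = sqNorm (pderivX v) + sqNorm (pderivY v) + sqNorm v := by
        rw [lintegral_add_left (by fun_prop), lintegral_add_left (by fun_prop)]
        rfl
    _ ≤ ENNReal.ofReal a + ENNReal.ofReal b + ENNReal.ofReal c := by gcongr
    _ ≤ ENNReal.ofReal (d ^ 2) := by
        rw [← ENNReal.ofReal_add ha hb, ← ENNReal.ofReal_add (by positivity) hc]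
        exact ENNReal.ofReal_le_ofReal habc

/-- The error bound for functions that are `C⁴` on the whole plane. -/
lemma energyNorm_sub_twoScale_le {u : ℝ × ℝ → ℝ} {N σ : ℕ} (hu : ContDiff ℝ (4 : ℕ) u)
    (hσ : 0 < σ) (hσN : σ ≤ N) :
    energyNorm (fun p => u p - twoScale N σ u p)
      ≤ 7 * ((N : ℝ)⁻¹ * semi2 u + ((σ : ℝ) ^ 3)⁻¹ * L2norm (uxxyy u)) := by
  have hA := L2norm_nonneg (pderivX (pderivX u))
  have hB := L2norm_nonneg (pderivX (pderivY u))
  have hD := L2norm_nonneg (pderivY (pderivY u))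
  have hG := L2norm_nonneg (uxxyy u)
  have hn : 0 ≤ (N : ℝ)⁻¹ := by positivity
  have hs : 0 ≤ (σ : ℝ)⁻¹ := by positivity
  refine energyNorm_le_of_sqNorm_le
    (continuous_sub_twoScale hu.continuous (hσ.trans_le hσN) hσ) (by positivity) (by positivity)
    (by positivity) (by unfold semi2; positivity) (sqNorm_pderivX_sub_twoScale_le hu hσ hσN)
    (sqNorm_pderivY_sub_twoScale_le hu hσ hσN) (sqNorm_sub_twoScale_le hu hσ hσN) ?_
  rw [semi2, ← inv_pow]
  generalize L2norm (pderivX (pderivX u)) = A at *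
  generalize L2norm (pderivX (pderivY u)) = B at *
  generalize L2norm (pderivY (pderivY u)) = D at *
  generalize L2norm (uxxyy u) = G at *
  generalize (N : ℝ)⁻¹ = n at *
  generalize (σ : ℝ)⁻¹ = s at *
  have hAn := mul_nonneg hn hA
  have hBn := mul_nonneg hn hB
  have hDn := mul_nonneg hn hD
  have hGs := mul_nonneg (pow_nonneg hs 3) hG
  nlinarith [mul_nonneg hAn hBn, mul_nonneg hAn hDn, mul_nonneg hAn hGs, mul_nonneg hBn hDn,
    mul_nonneg hBn hGs, mul_nonneg hDn hGs, sq_nonneg (n * A), sq_nonneg (n * B),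
    sq_nonneg (n * D), sq_nonneg (s ^ 3 * G)]

lemma C4Near.exists_contDiff_eqOn {u : ℝ × ℝ → ℝ} (hu : C4Near u) :
    ∃ w : ℝ × ℝ → ℝ, ContDiff ℝ (4 : ℕ) w ∧ Set.EqOn u w unitSquare := by
  obtain ⟨U, hU, hsU, hu⟩ := hu
  obtain ⟨L, hL, hsL, hLU⟩ := exists_compact_between isCompact_unitSquare hU hsU
  obtain ⟨f, hf1, hf0, -⟩ := exists_contMDiffMap_one_nhds_of_subset_interior
    (n := 4) (modelWithCornersSelf ℝ (ℝ × ℝ)) isCompact_unitSquare.isClosed hsL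
  have hf : ContDiff ℝ 4 f := f.contMDiff.contDiff
  refine ⟨fun p => f p * u p, contDiff_iff_contDiffAt.2 fun p => ?_, fun p hp => ?_⟩
  · by_cases hp : p ∈ U
    · exact hf.contDiffAt.mul (hu.contDiffAt (hU.mem_nhds hp))
    · have hz : (fun p => f p * u p) =ᶠ[nhds p] fun _ => 0 := by
        filter_upwards [hL.isClosed.isOpen_compl.mem_nhds fun h => hp (hLU h)] with q hq
        rw [hf0 q hq, zero_mul]
      exact contDiffAt_const.congr_of_eventuallyEq hz
  · have : f p = 1 := hf1.self_of_nhdsSet p hp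
    simp [this]

lemma eqOn_pderivX {v w : ℝ × ℝ → ℝ} (h : Set.EqOn v w Omega2) :
    Set.EqOn (pderivX v) (pderivX w) Omega2 := fun p hp => by
  refine Filter.EventuallyEq.deriv_eq ?_
  filter_upwards [isOpen_Ioo.mem_nhds hp.1] with x hx using h ⟨hx, hp.2⟩

lemma eqOn_pderivY {v w : ℝ × ℝ → ℝ} (h : Set.EqOn v w Omega2) :
    Set.EqOn (pderivY v) (pderivY w) Omega2 := fun p hp => by
  refine Filter.EventuallyEq.deriv_eq ?_
  filter_upwards [isOpen_Ioo.mem_nhds hp.2] with y hy using h ⟨hp.1, hy⟩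

lemma L2norm_congr {v w : ℝ × ℝ → ℝ} (h : Set.EqOn v w Omega2) : L2norm v = L2norm w := by
  rw [L2norm, L2norm, setIntegral_congr_fun measurableSet_Omega2 fun p hp => by rw [h hp]]

lemma energyNorm_congr {v w : ℝ × ℝ → ℝ} (h : Set.EqOn v w Omega2) :
    energyNorm v = energyNorm w := by
  rw [energyNorm, energyNorm, setIntegral_congr_fun measurableSet_Omega2 fun p hp => by
    rw [h hp, eqOn_pderivX h hp, eqOn_pderivY h hp]]

lemma interp_congr {v w : ℝ × ℝ → ℝ} (h : Set.EqOn v w unitSquare) (M K : ℕ) :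
    interp M K v = interp M K w := by
  have hnode : ∀ {M i : ℕ}, i ∈ range (M + 1) → (i : ℝ) / M ∈ Set.Icc (0 : ℝ) 1 := by
    intro M i hi
    have : (i : ℝ) ≤ M := by exact_mod_cast Nat.lt_succ_iff.1 (mem_range.1 hi)
    exact ⟨by positivity, div_le_one_of_le₀ this (by positivity)⟩
  funext p
  refine Finset.sum_congr rfl fun i hi => Finset.sum_congr rfl fun j hj => ?_
  rw [h (Set.mk_mem_prod (hnode hi) (hnode hj))]

/-- Energy-norm error bound for the two-scale interpolant:
`|||u − Î_{N,N}u||| ≤ C (N⁻¹ |u|₂ + σ⁻³ ‖∂⁴u/∂x²∂y²‖_{0,Ω})`. -/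
theorem two_scale_interpolant_error_bound :
    ∃ C : ℝ, 0 < C ∧ ∀ (N σ : ℕ), 0 < N → 0 < σ → σ ∣ N →
      ∀ u : ℝ × ℝ → ℝ, C4Near u → VanishOnBoundary u →
        energyNorm (fun p => u p - twoScale N σ u p) ≤
          C * ((N : ℝ)⁻¹ * semi2 u + ((σ : ℝ) ^ 3)⁻¹ * L2norm (uxxyy u)) := by
  refine ⟨7, by norm_num, fun N σ hN hσ hdvd u hu _ => ?_⟩
  obtain ⟨w, hw, huw⟩ := hu.exists_contDiff_eqOn
  have h := huw.mono Omega2_subset_unitSquare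
  have herr : Set.EqOn (fun p => u p - twoScale N σ u p) (fun p => w p - twoScale N σ w p)
      Omega2 := fun p hp => by
    simp only [twoScale, interp_congr huw, h hp]
  have hX := eqOn_pderivX h
  have hY := eqOn_pderivY h
  rw [energyNorm_congr herr, semi2, L2norm_congr (eqOn_pderivX hX),
    L2norm_congr (eqOn_pderivX hY), L2norm_congr (eqOn_pderivY hY), uxxyy,
    L2norm_congr (eqOn_pderivX (eqOn_pderivX (eqOn_pderivY hY)))]
  exact energyNorm_sub_twoScale_le hw hσ (Nat.le_of_dvd hN hdvd)
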